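/- For every integer r ≥ 1, the sum over n from 2 to infinity of H_{n−1}·h_n^{(r)}/(n·C(n+r, r)) equals H_r·π²/6 + ζ(3). -/

import Mathlib

open Finset Real

noncomputable def H (n : ℕ) : ℝ := ∑ i ∈ Finset.range n, 1/((i:ℝ)+1)

noncomputable def H2 (n : ℕ) : ℝ := ∑ i ∈ Finset.range n, 1/((i:ℝ)+1)^2

noncomputable def H3 (n : ℕ) : ℝ := ∑ i ∈ Finset.range n, 1/((i:ℝ)+1)^3

noncomputable def hh (r n : ℕ) : ℝ := (Nat.choose (n+r-1) (r-1)) * (H (n+r-1) - H (r-1))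

noncomputable def zeta3 : ℝ := ∑' n : ℕ, 1/((n:ℝ)+1)^3

/-!
Put `q r n = h_n^{(r)} / (n · C(n+r, r))`, with the convention `h_n^{(0)} = 1 / n`. The difference
`q (r+1) n - q r n` telescopes in `n`, so `∑ q r n` does not depend on `r`, and at `r = 0` it is
`∑ 1 / n² = π² / 6`. Multiplying the telescoping identity by `H_{n-1}` and summing by parts leaves
the extra term `q (r+1) n / (r+1)`; hence `∑ H_{n-1} q r n` grows by `π² / (6 (r+1))` from `r` to
`r + 1`. Its value at `r = 0` is Euler's sum `∑ H_{n-1} / n² = ζ(3)`, obtained by summing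
`1 / (i j (i + j))` along rows and along antidiagonals.
-/

open Filter Topology Asymptotics

theorem H_zero : H 0 = 0 := by simp [H]

theorem H_succ (n : ℕ) : H (n + 1) = H n + 1 / ((n : ℝ) + 1) := by
  simp [H, Finset.sum_range_succ]

theorem monotone_H : Monotone H := by
  refine monotone_nat_of_le_succ fun n => ?_
  rw [H_succ]
  exact le_add_of_nonneg_right (by positivity)

theorem H_nonneg (n : ℕ) : 0 ≤ H n :=
  H_zero ▸ monotone_H n.zero_le

theorem H_add_sub_H_nonneg (n r : ℕ) : 0 ≤ H (n + r) - H r :=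
  sub_nonneg.mpr (monotone_H (Nat.le_add_left r n))

theorem H_add_le (n r : ℕ) : H (n + r) ≤ H n + H r := by
  induction n with
  | zero => simp [H_zero]
  | succ n ih =>
    have hterm : 1 / (((n + r : ℕ) : ℝ) + 1) ≤ 1 / ((n : ℝ) + 1) := by gcongr; simp
    rw [Nat.add_right_comm, H_succ, H_succ]
    linarith

theorem tendsto_H_add_sub_H (a : ℕ) :
    Tendsto (fun n : ℕ => H (n + a) - H n) atTop (𝓝 0) := by
  induction a with
  | zero => simp
  | succ a ih =>
    have hlast : Tendsto (fun n : ℕ => 1 / (((n + a : ℕ) : ℝ) + 1)) atTop (𝓝 0) :=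
      tendsto_one_div_add_atTop_nhds_zero_nat.comp (tendsto_add_atTop_nat a)
    convert ih.add hlast using 2 with n
    · rw [← add_assoc, H_succ]
      ring
    · rw [add_zero]

theorem isBigO_H_log : H =O[atTop] fun n : ℕ => log n := by
  have hle (n : ℕ) : ‖H n‖ ≤ ‖1 + log n‖ := by
    have hlog : H n ≤ 1 + log n := by
      simpa [H, harmonic] using harmonic_le_one_add_log n
    rw [Real.norm_of_nonneg (H_nonneg n)]
    exact hlog.trans (le_abs_self _)
  have hone : (fun _ : ℕ => (1 : ℝ)) =O[atTop] fun n : ℕ => log n :=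
    (isLittleO_const_log_atTop.comp_tendsto tendsto_natCast_atTop_atTop).isBigO
  exact (isBigO_of_le _ hle).trans (hone.add (isBigO_refl _ _))

theorem tendsto_H_pow_div (m : ℕ) :
    Tendsto (fun n : ℕ => H n ^ m / ((n : ℝ) + 1)) atTop (𝓝 0) := by
  have hlog : Tendsto (fun n : ℕ => log n ^ m / (1 * (n : ℝ) + 1)) atTop (𝓝 0) :=
    (tendsto_pow_log_div_mul_add_atTop 1 1 m one_ne_zero).comp tendsto_natCast_atTop_atTop
  simp only [one_mul, div_eq_mul_inv] at hlog ⊢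
  exact ((isBigO_H_log.pow m).mul (isBigO_refl _ _)).trans_tendsto hlog

theorem hasSum_of_nonneg_of_eq_add_sub_succ {f g G : ℕ → ℝ} {L : ℝ} (hf : ∀ n, 0 ≤ f n)
    (hfg : ∀ n, f n = g n + (G n - G (n + 1))) (hG : Tendsto G atTop (𝓝 0))
    (hg : HasSum g L) : HasSum f (L + G 0) := by
  have hpartial (N : ℕ) : ∑ n ∈ range N, f n = ∑ n ∈ range N, g n + (G 0 - G N) := by
    rw [Finset.sum_congr rfl fun n _ => hfg n, Finset.sum_add_distrib, Finset.sum_range_sub']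
  rw [hasSum_iff_tendsto_nat_of_nonneg hf]
  simpa only [hpartial, sub_zero] using hg.tendsto_sum_nat.add (hG.const_sub (G 0))

theorem hasSum_one_div_add_one_sq :
    HasSum (fun n : ℕ => 1 / ((n : ℝ) + 1) ^ 2) (π ^ 2 / 6) := by
  simpa using (hasSum_nat_add_iff' 1).mpr hasSum_zeta_two

/-- The quotient `h_{n+1}^{(r)} / ((n+1) · C(n+1+r, r))`, the summand common to the series studied
here. The closed form is chosen so that `r = 0` is covered by the convention `h_n^{(0)} = 1 / n`,
whereas `hh 0` is distorted by truncated subtraction. -/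
noncomputable def hyperharmonicQuotient (r n : ℕ) : ℝ :=
  (1 + r * (H (n + r) - H r)) / (((n : ℝ) + 1) * ((n : ℝ) + r + 1))

/-- The boundary term left by the telescoping that passes from `hyperharmonicQuotient r` to
`hyperharmonicQuotient (r + 1)`. -/
noncomputable def boundaryTerm (r n : ℕ) : ℝ :=
  (H (n + r) - H r) / ((n : ℝ) + r + 1)

theorem hyperharmonicQuotient_nonneg (r n : ℕ) : 0 ≤ hyperharmonicQuotient r n := by
  have := H_add_sub_H_nonneg n r
  unfold hyperharmonicQuotient
  positivity

theorem hyperharmonicQuotient_zero_left (n : ℕ) :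
    hyperharmonicQuotient 0 n = 1 / ((n : ℝ) + 1) ^ 2 := by
  simp [hyperharmonicQuotient, sq]

theorem hyperharmonicQuotient_one_left (n : ℕ) :
    hyperharmonicQuotient 1 n = H (n + 1) / (((n : ℝ) + 1) * ((n : ℝ) + 2)) := by
  simp only [hyperharmonicQuotient, H_succ 0, H_zero]
  norm_num [add_assoc]

theorem hh_div_eq_hyperharmonicQuotient {r : ℕ} (hr : 1 ≤ r) (n : ℕ) :
    hh r (n + 1) / (((n : ℝ) + 1) * (Nat.choose (n + 1 + r) r : ℝ))
      = hyperharmonicQuotient r n := by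
  obtain ⟨k, rfl⟩ := Nat.exists_eq_add_of_le' hr
  have habsorb : ((n : ℝ) + k + 2) * (Nat.choose (n + k + 1) k : ℝ)
      = (Nat.choose (n + k + 2) (k + 1) : ℝ) * ((k : ℝ) + 1) := by
    exact_mod_cast Nat.add_one_mul_choose_eq (n + k + 1) k
  have hchoose : (Nat.choose (n + k + 2) (k + 1) : ℝ) ≠ 0 := by
    exact_mod_cast (Nat.choose_pos (by omega)).ne'
  have hden : n + 1 + (k + 1) = n + k + 2 := by ring
  have hnum : n + k + 2 - 1 = n + k + 1 := rfl
  simp only [hh, hyperharmonicQuotient, hden, hnum, Nat.add_sub_cancel, H_succ k, ← add_assoc]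
  push_cast
  rw [div_eq_div_iff (by positivity) (by positivity)]
  field_simp
  linear_combination (H (n + k + 1) - H k) * habsorb

theorem boundaryTerm_zero_right (r : ℕ) : boundaryTerm r 0 = 0 := by
  simp [boundaryTerm]

theorem boundaryTerm_succ_right (r n : ℕ) :
    boundaryTerm r (n + 1) = ((n : ℝ) + 1) / (r + 1) * hyperharmonicQuotient (r + 1) n := by
  simp only [boundaryTerm, hyperharmonicQuotient, H_succ r, Nat.add_right_comm n 1 r, ← add_assoc]
  push_cast
  field_simp
  ring

theorem hyperharmonicQuotient_succ_left (r n : ℕ) :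
    hyperharmonicQuotient (r + 1) n
      = hyperharmonicQuotient r n + (boundaryTerm r n - boundaryTerm r (n + 1)) := by
  rw [boundaryTerm_succ_right]
  simp only [boundaryTerm, hyperharmonicQuotient, ← add_assoc, H_succ]
  push_cast
  field_simp
  ring

theorem H_mul_hyperharmonicQuotient_succ_left (r n : ℕ) :
    H n * hyperharmonicQuotient (r + 1) n
      = (H n * hyperharmonicQuotient r n + hyperharmonicQuotient (r + 1) n / (r + 1))
        + (H n * boundaryTerm r n - H (n + 1) * boundaryTerm r (n + 1)) := by
  have hlast : 1 / ((n : ℝ) + 1) * boundaryTerm r (n + 1)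
      = hyperharmonicQuotient (r + 1) n / (r + 1) := by
    rw [boundaryTerm_succ_right]
    field_simp
  rw [H_succ]
  linear_combination H n * hyperharmonicQuotient_succ_left r n + hlast

theorem boundaryTerm_nonneg (r n : ℕ) : 0 ≤ boundaryTerm r n :=
  div_nonneg (H_add_sub_H_nonneg n r) (by positivity)

theorem boundaryTerm_le (r n : ℕ) : boundaryTerm r n ≤ H n / ((n : ℝ) + 1) := by
  have hH : H (n + r) - H r ≤ H n := by linarith [H_add_le n r]
  have := H_nonneg n
  unfold boundaryTerm
  gcongr
  simp

theorem tendsto_H_pow_mul_boundaryTerm (m r : ℕ) :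
    Tendsto (fun n => H n ^ m * boundaryTerm r n) atTop (𝓝 0) := by
  refine squeeze_zero (fun n => ?_) (fun n => ?_) (tendsto_H_pow_div (m + 1))
  · exact mul_nonneg (pow_nonneg (H_nonneg n) m) (boundaryTerm_nonneg r n)
  · rw [pow_succ, mul_div_assoc]
    exact mul_le_mul_of_nonneg_left (boundaryTerm_le r n) (pow_nonneg (H_nonneg n) m)

theorem hasSum_hyperharmonicQuotient (r : ℕ) :
    HasSum (hyperharmonicQuotient r) (π ^ 2 / 6) := by
  induction r with
  | zero => simpa only [← hyperharmonicQuotient_zero_left] using hasSum_one_div_add_one_sq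
  | succ r ih =>
    simpa [boundaryTerm_zero_right] using
      hasSum_of_nonneg_of_eq_add_sub_succ (hyperharmonicQuotient_nonneg (r + 1))
        (hyperharmonicQuotient_succ_left r) (by simpa using tendsto_H_pow_mul_boundaryTerm 0 r) ih

theorem summable_H_add_one_div_sq : Summable fun n : ℕ => H (n + 1) / ((n : ℝ) + 1) ^ 2 := by
  refine .of_nonneg_of_le (fun n => div_nonneg (H_nonneg _) (by positivity)) (fun n => ?_)
    ((hasSum_hyperharmonicQuotient 1).summable.mul_left 2)
  have := H_nonneg (n + 1)
  rw [hyperharmonicQuotient_one_left, ← mul_div_assoc,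
    div_le_div_iff₀ (by positivity) (by positivity)]
  have hden : ((n : ℝ) + 1) * (n + 2) ≤ 2 * (n + 1) ^ 2 := by nlinarith [n.cast_nonneg (α := ℝ)]
  nlinarith

/-- The summand `1 / (i j (i + j))`, with `i = p.1 + 1` and `j = p.2 + 1`, of the Tornheim double
series, whose rows and antidiagonals are both sums of harmonic numbers. -/
noncomputable def tornheimTerm (p : ℕ × ℕ) : ℝ :=
  1 / (((p.1 : ℝ) + 1) * ((p.2 : ℝ) + 1) * ((p.1 : ℝ) + p.2 + 2))

theorem tornheimTerm_nonneg (p : ℕ × ℕ) : 0 ≤ tornheimTerm p := by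
  unfold tornheimTerm
  positivity

theorem hasSum_tornheimTerm_row (n : ℕ) :
    HasSum (fun k => tornheimTerm (n, k)) (H (n + 1) / ((n : ℝ) + 1) ^ 2) := by
  have htelescope (k : ℕ) : tornheimTerm (n, k) = 0 + ((H (k + (n + 1)) - H k) / ((n : ℝ) + 1) ^ 2
      - (H (k + 1 + (n + 1)) - H (k + 1)) / ((n : ℝ) + 1) ^ 2) := by
    rw [Nat.add_right_comm k 1, H_succ, H_succ k, tornheimTerm]
    push_cast
    field_simp
    ring
  have hboundary : Tendsto (fun k : ℕ => (H (k + (n + 1)) - H k) / ((n : ℝ) + 1) ^ 2)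
      atTop (𝓝 0) := by
    simpa using (tendsto_H_add_sub_H (n + 1)).div_const (((n : ℝ) + 1) ^ 2)
  simpa [H_zero] using hasSum_of_nonneg_of_eq_add_sub_succ (fun k => tornheimTerm_nonneg (n, k))
    htelescope hboundary hasSum_zero

theorem summable_tornheimTerm : Summable tornheimTerm := by
  rw [summable_prod_of_nonneg tornheimTerm_nonneg]
  refine ⟨fun n => (hasSum_tornheimTerm_row n).summable, ?_⟩
  simpa only [(hasSum_tornheimTerm_row _).tsum_eq] using summable_H_add_one_div_sq

theorem sum_antidiagonal_one_div_fst (m : ℕ) :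
    ∑ p ∈ antidiagonal m, 1 / ((p.1 : ℝ) + 1) = H (m + 1) := by
  rw [Finset.Nat.sum_antidiagonal_eq_sum_range_succ_mk, H]

theorem sum_antidiagonal_tornheimTerm (m : ℕ) :
    ∑ p ∈ antidiagonal m, tornheimTerm p = 2 * (H (m + 1) / ((m : ℝ) + 2) ^ 2) := by
  have hsnd : ∑ p ∈ antidiagonal m, 1 / ((p.2 : ℝ) + 1) = H (m + 1) := by
    rw [← sum_antidiagonal_one_div_fst, ← Finset.Nat.sum_antidiagonal_swap]
    rfl
  have hpartialFractions : ∀ p ∈ antidiagonal m,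
      tornheimTerm p = (1 / ((p.1 : ℝ) + 1) + 1 / ((p.2 : ℝ) + 1)) / ((m : ℝ) + 2) ^ 2 := by
    intro p hp
    rw [← mem_antidiagonal.mp hp, tornheimTerm]
    push_cast
    field_simp
    ring
  rw [Finset.sum_congr rfl hpartialFractions, ← Finset.sum_div, Finset.sum_add_distrib,
    sum_antidiagonal_one_div_fst, hsnd]
  ring

theorem hasSum_H_div_add_one_sq_half_tsum_tornheimTerm :
    HasSum (fun n : ℕ => H n / ((n : ℝ) + 1) ^ 2) ((∑' p, tornheimTerm p) / 2) := by
  have hdiag : HasSum (fun m : ℕ => 2 * (H (m + 1) / ((m : ℝ) + 2) ^ 2))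
      (∑' p, tornheimTerm p) := by
    refine ((HasAntidiagonal.sigmaAntidiagonalEquivProd.hasSum_iff).mpr
      summable_tornheimTerm.hasSum).sigma fun m => ?_
    rw [← sum_antidiagonal_tornheimTerm, ← Finset.sum_coe_sort]
    exact hasSum_fintype _
  refine (hasSum_nat_add_iff' 1).mp ?_
  simp only [Finset.sum_range_one, H_zero, zero_div, sub_zero]
  refine (hdiag.div_const 2).congr_fun fun m => ?_
  push_cast
  ring

/-- Euler's `ζ(2, 1) = ζ(3)`. -/
theorem hasSum_H_div_add_one_sq : HasSum (fun n : ℕ => H n / ((n : ℝ) + 1) ^ 2) zeta3 := by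
  have hrow : HasSum (fun n : ℕ => H (n + 1) / ((n : ℝ) + 1) ^ 2) (∑' p, tornheimTerm p) :=
    summable_tornheimTerm.hasSum.prod_fiberwise hasSum_tornheimTerm_row
  have hcubes : HasSum (fun n : ℕ => 1 / ((n : ℝ) + 1) ^ 3) ((∑' p, tornheimTerm p) / 2) := by
    have hdiff := hrow.sub hasSum_H_div_add_one_sq_half_tsum_tornheimTerm
    rw [sub_half] at hdiff
    refine hdiff.congr_fun fun n => ?_
    rw [H_succ]
    field_simp
    ring
  rw [zeta3, hcubes.tsum_eq]
  exact hasSum_H_div_add_one_sq_half_tsum_tornheimTerm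

theorem hasSum_H_mul_hyperharmonicQuotient (r : ℕ) :
    HasSum (fun n => H n * hyperharmonicQuotient r n) (H r * π ^ 2 / 6 + zeta3) := by
  induction r with
  | zero => simpa [hyperharmonicQuotient_zero_left, H_zero, div_eq_mul_inv]
      using hasSum_H_div_add_one_sq
  | succ r ih =>
    have hsum := hasSum_of_nonneg_of_eq_add_sub_succ
      (fun n => mul_nonneg (H_nonneg n) (hyperharmonicQuotient_nonneg (r + 1) n))
      (H_mul_hyperharmonicQuotient_succ_left r)
      (by simpa using tendsto_H_pow_mul_boundaryTerm 1 r)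
      (ih.add ((hasSum_hyperharmonicQuotient (r + 1)).div_const ((r : ℝ) + 1)))
    convert hsum using 1
    rw [H_succ, boundaryTerm_zero_right]
    ring

theorem stmt14 (r : ℕ) (hr : 1 ≤ r) :
    ∑' n : ℕ, H (n+1) * hh r (n+2) / (((n:ℝ)+2) * (Nat.choose (n+2+r) r : ℝ))
      = H r * Real.pi^2/6 + zeta3 := by
  have hsummand (n : ℕ) :
      H (n + 1) * hh r (n + 2) / (((n : ℝ) + 2) * (Nat.choose (n + 2 + r) r : ℝ))
        = H (n + 1) * hyperharmonicQuotient r (n + 1) := by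
    rw [← hh_div_eq_hyperharmonicQuotient hr, mul_div_assoc]
    push_cast
    ring_nf
  have hsum := (hasSum_nat_add_iff' 1).mpr (hasSum_H_mul_hyperharmonicQuotient r)
  simp only [Finset.sum_range_one, H_zero, zero_mul, sub_zero] at hsum
  rw [tsum_congr hsummand, hsum.tsum_eq]
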